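/- arXiv:1808.07037 — 2 statements merged into one kernel-verified Lean document; each statement's English description precedes it below -/
import Mathlib

section
/- Let H be a pre-Hilbert space and L : H → H̄ a positive linear operator into the completion H̄. Define the semi-inner product (x,y) := ⟨x, L y⟩ with kernel N_L, and let H_L := H/N_L. Then there exists a linear isometry from H_L (with the induced inner product) into H̄; equivalently, the Hilbert dimension of the completion of H_L is at most the Hilbert dimension of H̄. -/
open scoped InnerProductSpace ComplexOrder

/-!
For linear maps `A, L : V → E` with `⟪A x, L x⟫ ≥ 0`, let `K` be the Hilbert completion of `V` for
the semi-inner product `(x, y) = ⟪A x, L y⟫`, with canonical map `j : V → K`. Inside `E ⊕ K`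
consider the closed subspace `G` of pairs `(e, k)` with `⟪L y, e⟫ = ⟪j y, k⟫` for all `y`. Since `j`
has dense range, `e` determines `k`, so the first projection is injective on `G`; since `G` contains
every `(A x, j x)`, the second projection `G → K` has dense range and its adjoint is injective. Thus
`K → G → E` is an injective bounded operator `T`, and the isometric part of its polar decomposition
`T = U (T† T)^{1/2}` embeds `K` into `E`.
-/

open ContinuousLinearMap (adjoint)

section RCLike

variable {𝕜 : Type*} [RCLike 𝕜]

theorem exists_linearIsometry_of_denseRange_of_norm_eq {X Y F : Type*}
    [AddCommGroup X] [Module 𝕜 X] [NormedAddCommGroup Y] [NormedSpace 𝕜 Y]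
    [NormedAddCommGroup F] [NormedSpace 𝕜 F] [CompleteSpace F]
    {e : X →ₗ[𝕜] Y} {f : X →ₗ[𝕜] F} (he : DenseRange e) (hnorm : ∀ x, ‖f x‖ = ‖e x‖) :
    ∃ U : Y →ₗᵢ[𝕜] F, ∀ x, U (e x) = f x := by
  have hextend : ∀ x, f.extendOfNorm e (e x) = f x :=
    LinearMap.extendOfNorm_eq he ⟨1, fun x ↦ by rw [one_mul, hnorm]⟩
  have hisom : ∀ y, ‖f.extendOfNorm e y‖ = ‖y‖ := fun y ↦
    he.induction_on (p := fun y ↦ ‖f.extendOfNorm e y‖ = ‖y‖) y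
      (isClosed_eq (by fun_prop) continuous_norm) fun x ↦ by rw [hextend, hnorm]
  exact ⟨⟨(f.extendOfNorm e).toLinearMap, hisom⟩, hextend⟩

section Adjoint

variable {E F : Type*} [NormedAddCommGroup E] [InnerProductSpace 𝕜 E] [CompleteSpace E]
  [NormedAddCommGroup F] [InnerProductSpace 𝕜 F] [CompleteSpace F] {T : E →L[𝕜] F}

theorem adjoint_injective_of_denseRange (hT : DenseRange T) :
    Function.Injective (adjoint T) := by
  refine (injective_iff_map_eq_zero _).2 fun y hy ↦ hT.eq_zero_of_inner_left 𝕜 fun x ↦ ?_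
  rw [← ContinuousLinearMap.adjoint_inner_left, hy, inner_zero_left]

theorem denseRange_adjoint_of_injective (hT : Function.Injective T) :
    DenseRange (adjoint T) := by
  have hker : T.ker = ⊥ := LinearMap.ker_eq_bot.2 hT
  have hclosure : (adjoint T).range.topologicalClosure = ⊤ := by
    rw [← T.orthogonal_ker, hker, Submodule.bot_orthogonal_eq_top]
  exact Submodule.dense_iff_topologicalClosure_eq_top.2 hclosure

end Adjoint

section BalancedSubspace

variable {E K ι κ : Type*} [NormedAddCommGroup E] [InnerProductSpace 𝕜 E]
  [NormedAddCommGroup K] [InnerProductSpace 𝕜 K]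

variable (𝕜) in
/-- The closed subspace of pairs `(e, k)` in the Hilbert sum `E ⊕ K` with `⟪b i, e⟫ = ⟪v i, k⟫` for
all `i`; when `b = L` and `v = j` are linear, it is the adjoint of the linear relation `j x ↦ L x`.
Writing it as an orthogonal complement makes its completeness automatic. -/
noncomputable def balancedSubspace (b : κ → E) (v : κ → K) : Submodule 𝕜 (WithLp 2 (E × K)) :=
  (Submodule.span 𝕜 (Set.range fun i ↦ WithLp.toLp 2 (b i, -v i)))ᗮ

theorem mem_balancedSubspace_iff {b : κ → E} {v : κ → K} {w : WithLp 2 (E × K)} :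
    w ∈ balancedSubspace 𝕜 b v ↔ ∀ i, ⟪b i, w.fst⟫_𝕜 = ⟪v i, w.snd⟫_𝕜 := by
  rw [balancedSubspace, ← Submodule.span_singleton_le_iff_mem, ← Submodule.isOrtho_iff_le,
    Submodule.isOrtho_comm, Submodule.isOrtho_span]
  simp [add_neg_eq_zero]

theorem injective_fst_balancedSubspace {b : κ → E} {v : κ → K} (hv : DenseRange v) :
    Function.Injective (WithLp.fstL 2 𝕜 E K ∘L (balancedSubspace 𝕜 b v).subtypeL) := by
  refine (injective_iff_map_eq_zero _).2 fun w (hfst : w.1.fst = 0) ↦ ?_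
  have hsnd : w.1.snd = 0 := hv.eq_zero_of_inner_right 𝕜 fun i ↦ by
    rw [← mem_balancedSubspace_iff.1 w.2 i, hfst, inner_zero_right]
  exact Subtype.ext (WithLp.ofLp_injective 2 (Prod.ext hfst hsnd))

theorem denseRange_snd_balancedSubspace {a : ι → E} {b : κ → E} {u : ι → K} {v : κ → K}
    (hu : DenseRange u) (hinner : ∀ i k, ⟪a i, b k⟫_𝕜 = ⟪u i, v k⟫_𝕜) :
    DenseRange (WithLp.sndL 2 𝕜 E K ∘L (balancedSubspace 𝕜 b v).subtypeL) := by
  have hmem (i : ι) : WithLp.toLp 2 (a i, u i) ∈ balancedSubspace 𝕜 b v :=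
    mem_balancedSubspace_iff.2 fun k ↦ by
      rw [← inner_conj_symm, ← inner_conj_symm (v k)]
      exact congrArg _ (hinner i k)
  refine hu.mono ?_
  rintro _ ⟨i, rfl⟩
  exact ⟨⟨_, hmem i⟩, rfl⟩

end BalancedSubspace

section SesquilinearForm

universe u

variable {V : Type u} [AddCommGroup V] [Module 𝕜 V]

/-- The semi-inner product on `V` given by a positive semidefinite sesquilinear form. -/
abbrev coreOfIsPosSemidef (B : V →ₗ⋆[𝕜] V →ₗ[𝕜] 𝕜) (hB : B.IsPosSemidef) :
    PreInnerProductSpace.Core 𝕜 V where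
  inner x y := B x y
  conj_inner_symm x y := hB.isSymm.eq y x
  re_inner_nonneg x := (RCLike.nonneg_iff.1 (hB.isNonneg.nonneg x)).1
  add_left x y z := B.map_add₂ x y z
  smul_left x y r := B.map_smulₛₗ₂ r x y

theorem exists_denseRange_inner_eq_of_isPosSemidef {B : V →ₗ⋆[𝕜] V →ₗ[𝕜] 𝕜}
    (hB : B.IsPosSemidef) :
    ∃ (K : Type u) (_ : NormedAddCommGroup K) (_ : InnerProductSpace 𝕜 K) (_ : CompleteSpace K)
      (j : V →ₗ[𝕜] K), DenseRange j ∧ ∀ x y, ⟪j x, j y⟫_𝕜 = B x y := by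
  let _ : SeminormedAddCommGroup V :=
    InnerProductSpace.Core.toSeminormedAddCommGroup (c := coreOfIsPosSemidef B hB)
  let _ : InnerProductSpace 𝕜 V := .ofCore (coreOfIsPosSemidef B hB)
  exact ⟨UniformSpace.Completion V, inferInstance, inferInstance, inferInstance,
    UniformSpace.Completion.toComplₗᵢ.toLinearMap, UniformSpace.Completion.denseRange_coe,
    UniformSpace.Completion.inner_coe⟩

end SesquilinearForm

end RCLike

section PolarDecomposition

variable {E F : Type*} [NormedAddCommGroup E] [InnerProductSpace ℂ E] [CompleteSpace E]
  [NormedAddCommGroup F] [InnerProductSpace ℂ F] [CompleteSpace F]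

theorem norm_sqrt_adjoint_comp_self_apply (T : E →L[ℂ] F) (x : E) :
    ‖CFC.sqrt (adjoint T ∘L T) x‖ = ‖T x‖ := by
  have hadjoint : adjoint (CFC.sqrt (adjoint T ∘L T)) = CFC.sqrt (adjoint T ∘L T) :=
    (IsSelfAdjoint.of_nonneg (CFC.sqrt_nonneg _)).adjoint_eq
  have hsq : CFC.sqrt (adjoint T ∘L T) ∘L CFC.sqrt (adjoint T ∘L T) = adjoint T ∘L T :=
    CFC.sqrt_mul_sqrt_self _
      ((ContinuousLinearMap.nonneg_iff_isPositive _).2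
        (ContinuousLinearMap.isPositive_adjoint_comp_self T))
  rw [ContinuousLinearMap.apply_norm_eq_sqrt_inner_adjoint_left, hadjoint, hsq,
    ← ContinuousLinearMap.apply_norm_eq_sqrt_inner_adjoint_left]

theorem nonempty_linearIsometry_of_injective {T : E →L[ℂ] F} (hT : Function.Injective T) :
    Nonempty (E →ₗᵢ[ℂ] F) := by
  set S := CFC.sqrt (adjoint T ∘L T)
  have hnorm : ∀ x, ‖T x‖ = ‖S x‖ := fun x ↦ (norm_sqrt_adjoint_comp_self_apply T x).symm
  have hinj : Function.Injective S := (injective_iff_map_eq_zero S).2 fun x hx ↦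
    (injective_iff_map_eq_zero T).1 hT x (by rw [← norm_eq_zero, hnorm, hx, norm_zero])
  have hself : IsSelfAdjoint S := .of_nonneg (CFC.sqrt_nonneg _)
  have hdense : DenseRange S := hself.adjoint_eq ▸ denseRange_adjoint_of_injective hinj
  obtain ⟨U, -⟩ := exists_linearIsometry_of_denseRange_of_norm_eq
    (e := S.toLinearMap) (f := T.toLinearMap) hdense hnorm
  exact ⟨U⟩

end PolarDecomposition

theorem nonempty_linearIsometry_of_inner_eq {E K ι κ : Type*}
    [NormedAddCommGroup E] [InnerProductSpace ℂ E] [CompleteSpace E]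
    [NormedAddCommGroup K] [InnerProductSpace ℂ K] [CompleteSpace K]
    {a : ι → E} {b : κ → E} {u : ι → K} {v : κ → K} (hu : DenseRange u) (hv : DenseRange v)
    (hinner : ∀ i k, ⟪a i, b k⟫_ℂ = ⟪u i, v k⟫_ℂ) : Nonempty (K →ₗᵢ[ℂ] E) := by
  set p := WithLp.fstL 2 ℂ E K ∘L (balancedSubspace ℂ b v).subtypeL
  set q := WithLp.sndL 2 ℂ E K ∘L (balancedSubspace ℂ b v).subtypeL
  have : CompleteSpace (balancedSubspace ℂ b v) :=
    (Submodule.isClosed_orthogonal _).completeSpace_coe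
  have hp : Function.Injective p := injective_fst_balancedSubspace hv
  have hq : DenseRange q := denseRange_snd_balancedSubspace hu hinner
  exact nonempty_linearIsometry_of_injective (T := p ∘L adjoint q)
    (hp.comp (adjoint_injective_of_denseRange hq))

section Complex

variable {V : Type*} [AddCommGroup V] [Module ℂ V]

theorem isPosSemidef_of_isNonneg {B : V →ₗ⋆[ℂ] V →ₗ[ℂ] ℂ} (hB : B.IsNonneg) :
    B.IsPosSemidef where
  nonneg := hB.nonneg
  eq x y := by
    have him (z : V) : (B z z).im = 0 := (Complex.nonneg_iff.1 (hB.nonneg z)).2.symm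
    have him_add : (B x y).im + (B y x).im = 0 := by
      simpa [him] using him (x + y)
    have hre_sub : (B x y).re - (B y x).re = 0 := by
      simpa [him, sub_eq_add_neg, add_comm] using him (x + Complex.I • y)
    apply Complex.ext
    · rw [Complex.conj_re]; linarith
    · rw [Complex.conj_im]; linarith

theorem exists_linearMap_inner_eq {E : Type*} [NormedAddCommGroup E] [InnerProductSpace ℂ E]
    [CompleteSpace E] {B : V →ₗ⋆[ℂ] V →ₗ[ℂ] ℂ} (hB : B.IsNonneg) {a b : V → E}
    (hfactor : ∀ x y, B x y = ⟪a x, b y⟫_ℂ) :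
    ∃ T : V →ₗ[ℂ] E, ∀ x y, ⟪T x, T y⟫_ℂ = B x y := by
  obtain ⟨K, _, _, _, j, hj, hinner⟩ :=
    exists_denseRange_inner_eq_of_isPosSemidef (isPosSemidef_of_isNonneg hB)
  obtain ⟨U⟩ : Nonempty (K →ₗᵢ[ℂ] E) := nonempty_linearIsometry_of_inner_eq hj hj
    fun x y ↦ (hfactor x y).symm.trans (hinner x y).symm
  exact ⟨U.toLinearMap ∘ₗ j, fun x y ↦ (U.inner_map_map _ _).trans (hinner x y)⟩

theorem posdimlem_general {E : Type*} [NormedAddCommGroup E] [InnerProductSpace ℂ E]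
    [CompleteSpace E] (A L : V →ₗ[ℂ] E) (hpos : ∀ x, 0 ≤ ⟪A x, L x⟫_ℂ)
    (N : Submodule ℂ V) (hN : (N : Set V) = {x | ⟪A x, L x⟫_ℂ = 0}) :
    ∃ T : (V ⧸ N) →ₗ[ℂ] E, ∀ x y : V,
      ⟪T (Submodule.Quotient.mk x), T (Submodule.Quotient.mk y)⟫_ℂ = ⟪A x, L y⟫_ℂ := by
  obtain ⟨T, hT⟩ : ∃ T : V →ₗ[ℂ] E, ∀ x y, ⟪T x, T y⟫_ℂ = ⟪A x, L y⟫_ℂ :=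
    exists_linearMap_inner_eq (B := ((innerₛₗ ℂ).comp A).compl₂ L) ⟨hpos⟩ fun _ _ ↦ rfl
  have hker : N ≤ T.ker := fun x hx ↦ by
    have hzero : ⟪A x, L x⟫_ℂ = 0 := hN.subset hx
    rwa [LinearMap.mem_ker, ← inner_self_eq_zero (𝕜 := ℂ), hT]
  exact ⟨N.liftQ T hker, hT⟩

end Complex

/-- Let `H` be a pre-Hilbert space, densely and isometrically embedded
(via `ι`) into a Hilbert space `Hb` (its completion), and let `L : H → Hb` be a positive
linear operator (`⟪x, Lx⟫ ≥ 0` for all `x`).  Let `N` be the kernel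
`{x | ⟪x, Lx⟫ = 0}` of the semi-inner product `(x,y) := ⟪x, Ly⟫` and `H_L := H/N`.
Then there is a linear isometry from `H_L` (with the induced inner product
`(x+N, y+N) = ⟪x, Ly⟫`) into `Hb`, i.e. a linear map `T : H/N → Hb` preserving the
induced inner products. -/
theorem posdimlem {H : Type*} [NormedAddCommGroup H] [InnerProductSpace ℂ H]
    {Hb : Type*} [NormedAddCommGroup Hb] [InnerProductSpace ℂ Hb] [CompleteSpace Hb]
    (ι : H →ₗᵢ[ℂ] Hb) (hdense : DenseRange ι)
    (L : H →ₗ[ℂ] Hb)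
    (hpos : ∀ x : H, 0 ≤ ⟪ι x, L x⟫_ℂ)
    (N : Submodule ℂ H) (hN : (N : Set H) = {x : H | ⟪ι x, L x⟫_ℂ = 0}) :
    ∃ T : (H ⧸ N) →ₗ[ℂ] Hb, ∀ x y : H,
      ⟪T (Submodule.Quotient.mk x), T (Submodule.Quotient.mk y)⟫_ℂ = ⟪ι x, L y⟫_ℂ :=
  posdimlem_general ι.toLinearMap L hpos N hN
end

section
/- Let H be a Hilbert space and (π_n)_{n≥0} a sequence of orthogonal projections π_n ∈ B(H^{⊗n}) (Hilbert space tensor powers, π_0 = id_ℂ). If for all n ≥ 1 the inequalities π_{n+1} ≤ id_H ⊗ π_n and π_{n+1} ≤ π_n ⊗ id_H hold, then for all m, n ≥ 1 we have π_{m+n} ≤ π_m ⊗ π_n. -/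
open ContinuousLinearMap

/-!
For projections, `p ≤ q` means `q * p = p`, so everything is algebra in monoids. Tensoring with a
unit is multiplicative, hence monotone for this relation, and the hypotheses telescope:
`π (m + n) ≤ π (m + n - 1) ⊗ 1 ≤ ⋯ ≤ π m ⊗ 1`, and symmetrically `π (m + n) ≤ 1 ⊗ π n`.
Finally `π m ⊗ π n = (π m ⊗ 1) * (1 ⊗ π n)`.
-/

/-- Associativity of a family of products `A m × A n → A (m + n)`, such as the tensor products of
operators on the tensor powers of a Hilbert space. The two sides lie in `A (k + (m + n))` and
`A (k + m + n)`, whence the heterogeneous equality. -/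
def GradedAssociative {A : ℕ → Type*} (tensor : ∀ m n, A m × A n → A (m + n)) : Prop :=
  ∀ k m n (a : A k) (b : A m) (c : A n),
    tensor k (m + n) (a, tensor m n (b, c)) ≍ tensor (k + m) n (tensor k m (a, b), c)

theorem map_mul_eq_right_trans {M N F : Type*} [Mul M] [Semigroup N] [FunLike F M N]
    [MulHomClass F M N] (f : F) {x q : M} {r : N} (hx : x * q = q) (hq : f q * r = r) :
    f x * r = r :=
  calc
    f x * r = f x * (f q * r) := by rw [hq]
    _ = f (x * q) * r := by rw [map_mul, mul_assoc]
    _ = r := by rw [hx, hq]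

theorem mul_eq_right_congr_of_heq {ι : Type*} {A : ι → Type*} [∀ i, Mul (A i)] (p : ∀ i, A i)
    {i j : ι} (hij : i = j) {x : A i} {y : A j} (hxy : x ≍ y) :
    x * p i = p i ↔ y * p j = p j := by
  subst hij
  rw [eq_of_heq hxy]

section Monoid

variable {A : ℕ → Type*} [∀ n, Monoid (A n)] {tensor : ∀ m n, A m × A n →* A (m + n)}
  {p : ∀ n, A n} {m n : ℕ}

theorem tensor_one_mul_eq_right (hassoc : GradedAssociative fun m n => tensor m n)
    (hR : ∀ n, 1 ≤ n → tensor n 1 (p n, 1) * p (n + 1) = p (n + 1)) (hm : 1 ≤ m) (hn : 1 ≤ n) :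
    tensor m n (p m, 1) * p (m + n) = p (m + n) := by
  induction n, hn using Nat.le_induction with
  | base => exact hR m hm
  | succ n _ ih =>
    have hsplit : tensor m (n + 1) (p m, 1) ≍ tensor (m + n) 1 (tensor m n (p m, 1), 1) := by
      simpa only [Prod.mk_one_one, map_one] using hassoc m n 1 (p m) 1 1
    rw [mul_eq_right_congr_of_heq p (Nat.add_assoc m n 1).symm hsplit]
    exact map_mul_eq_right_trans ((tensor (m + n) 1).comp (.inl _ _)) ih
      (hR (m + n) (Nat.le_add_right_of_le hm))

theorem one_tensor_mul_eq_right (hassoc : GradedAssociative fun m n => tensor m n)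
    (hL : ∀ n, 1 ≤ n → tensor 1 n (1, p n) * p (1 + n) = p (1 + n)) (hm : 1 ≤ m) (hn : 1 ≤ n) :
    tensor m n (1, p n) * p (m + n) = p (m + n) := by
  induction m, hm using Nat.le_induction with
  | base => exact hL n hn
  | succ m hm ih =>
    rw [Nat.add_comm m 1]
    have hsplit : tensor 1 (m + n) (1, tensor m n (1, p n)) ≍ tensor (1 + m) n (1, p n) := by
      simpa only [Prod.mk_one_one, map_one] using hassoc 1 m n 1 1 (p n)
    rw [← mul_eq_right_congr_of_heq p (Nat.add_assoc 1 m n).symm hsplit]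
    exact map_mul_eq_right_trans ((tensor 1 (m + n)).comp (.inr _ _)) ih
      (hL (m + n) (Nat.le_add_right_of_le hm))

theorem tensor_mul_eq_right (hassoc : GradedAssociative fun m n => tensor m n)
    (hL : ∀ n, 1 ≤ n → tensor 1 n (1, p n) * p (1 + n) = p (1 + n))
    (hR : ∀ n, 1 ≤ n → tensor n 1 (p n, 1) * p (n + 1) = p (n + 1)) (hm : 1 ≤ m) (hn : 1 ≤ n) :
    tensor m n (p m, p n) * p (m + n) = p (m + n) :=
  calc
    tensor m n (p m, p n) * p (m + n)
        = tensor m n (p m, 1) * (tensor m n (1, p n) * p (m + n)) := by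
      rw [← mul_assoc, ← map_mul, Prod.mk_mul_mk, mul_one, one_mul]
    _ = p (m + n) := by
      rw [one_tensor_mul_eq_right hassoc hL hm hn, tensor_one_mul_eq_right hassoc hR hm hn]

end Monoid

theorem isStarProjection_prodMk {R S : Type*} [Mul R] [Star R] [Mul S] [Star S] {p : R} {q : S}
    (hp : IsStarProjection p) (hq : IsStarProjection q) : IsStarProjection (p, q) where
  isIdempotentElem := Prod.ext hp.isIdempotentElem hq.isIdempotentElem
  isSelfAdjoint := Prod.ext hp.isSelfAdjoint hq.isSelfAdjoint

theorem proj_tensor_ineq_general {A : ℕ → Type*} [∀ n, CStarAlgebra (A n)]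
    [∀ n, PartialOrder (A n)] [∀ n, StarOrderedRing (A n)]
    (tensor : ∀ m n, A m × A n →⋆* A (m + n)) (hassoc : GradedAssociative fun m n => tensor m n)
    {p : ∀ n, A n} (hp : ∀ n, IsStarProjection (p n))
    (hL : ∀ n, 1 ≤ n → p (1 + n) ≤ tensor 1 n (1, p n))
    (hR : ∀ n, 1 ≤ n → p (n + 1) ≤ tensor n 1 (p n, 1)) {m n : ℕ} (hm : 1 ≤ m) (hn : 1 ≤ n) :
    p (m + n) ≤ tensor m n (p m, p n) := by
  have le_tensor_iff {m n : ℕ} {a : A m} {b : A n} (ha : IsStarProjection a)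
      (hb : IsStarProjection b) :
      p (m + n) ≤ tensor m n (a, b) ↔ tensor m n (a, b) * p (m + n) = p (m + n) :=
    (hp (m + n)).le_iff_mul_eq_right ((isStarProjection_prodMk ha hb).map (tensor m n))
  rw [le_tensor_iff (hp m) (hp n)]
  exact tensor_mul_eq_right (tensor := fun m n => (tensor m n).toMonoidHom) hassoc
    (fun n hn => (le_tensor_iff (.one _) (hp n)).1 (hL n hn))
    (fun n hn => (le_tensor_iff (hp n) (.one _)).1 (hR n hn)) hm hn

/-- Let `H` be a Hilbert space and `T n` its Hilbert-space tensor powers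
`H^{⊗n}` (given abstractly as a family of Hilbert spaces together with the usual tensor
product operation `tensorOp m n A B = A ⊗ B` on bounded operators, which is
multiplicative, unital, `*`-compatible and associative).  Let `π n` be orthogonal
projections on `T n` (with `π 0 = id` on `T 0 = ℂ`, which is not needed for the claim).
If for all `n ≥ 1` we have `π (n+1) ≤ id_H ⊗ π n` and `π (n+1) ≤ π n ⊗ id_H` (Loewner
order, i.e. the differences are positive operators), then `π (m+n) ≤ π m ⊗ π n` for all
`m, n ≥ 1`. -/
theorem proj_tensor_ineq
    (T : ℕ → Type*) [∀ n, NormedAddCommGroup (T n)] [∀ n, InnerProductSpace ℂ (T n)]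
    [∀ n, CompleteSpace (T n)]
    (tensorOp : ∀ m n, (T m →L[ℂ] T m) → (T n →L[ℂ] T n) → (T (m + n) →L[ℂ] T (m + n)))
    (hmul : ∀ m n (A A' : T m →L[ℂ] T m) (B B' : T n →L[ℂ] T n),
      tensorOp m n (A ∘L A') (B ∘L B') = tensorOp m n A B ∘L tensorOp m n A' B')
    (hone : ∀ m n, tensorOp m n 1 1 = 1)
    (hstar : ∀ m n (A : T m →L[ℂ] T m) (B : T n →L[ℂ] T n),
      star (tensorOp m n A B) = tensorOp m n (star A) (star B))
    (hassoc : ∀ k m n (A : T k →L[ℂ] T k) (B : T m →L[ℂ] T m) (C : T n →L[ℂ] T n),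
      tensorOp k (m + n) A (tensorOp m n B C) =
        cast (by rw [Nat.add_assoc]) (tensorOp (k + m) n (tensorOp k m A B) C))
    (π : ∀ n, T n →L[ℂ] T n)
    (hidem : ∀ n, π n ∘L π n = π n) (hsa : ∀ n, IsSelfAdjoint (π n))
    (hL : ∀ n, 1 ≤ n → (tensorOp 1 n 1 (π n) - π (1 + n)).IsPositive)
    (hR : ∀ n, 1 ≤ n → (tensorOp n 1 (π n) 1 - π (n + 1)).IsPositive) :
    ∀ m n, 1 ≤ m → 1 ≤ n →
      (tensorOp m n (π m) (π n) - π (m + n)).IsPositive := by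
  let tensor : ∀ m n, (T m →L[ℂ] T m) × (T n →L[ℂ] T n) →⋆* (T (m + n) →L[ℂ] T (m + n)) :=
    fun m n =>
      { toFun := fun x => tensorOp m n x.1 x.2
        map_one' := hone m n
        map_mul' := fun x y => hmul m n x.1 y.1 x.2 y.2
        map_star' := fun x => (hstar m n x.1 x.2).symm }
  have tensor_assoc : GradedAssociative fun m n => tensor m n := fun k m n a b c =>
    (heq_of_eq (hassoc k m n a b c)).trans (cast_heq _ _)
  exact fun m n hm hn => proj_tensor_ineq_general tensor tensor_assoc
    (fun n => ⟨hidem n, hsa n⟩) hL hR hm hn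
end
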